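/- The combinatorial R-map and K-map satisfy the 3D reflection equation of type C₃ on ℕ⁹: as maps from ℕ⁹ to ℕ⁹, R₍₆,₈,₉₎ ∘ K₍₃,₅,₇,₉₎ ∘ R₍₂,₄,₉₎ ∘ R₍₂,₅,₈₎ ∘ K₍₁,₄,₇,₈₎ ∘ K₍₁,₂,₃,₆₎ ∘ R₍₄,₅,₆₎ = R₍₄,₅,₆₎ ∘ K₍₁,₂,₃,₆₎ ∘ K₍₁,₄,₇,₈₎ ∘ R₍₂,₅,₈₎ ∘ R₍₂,₄,₉₎ ∘ K₍₃,₅,₇,₉₎ ∘ R₍₆,₈,₉₎. -/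

import Mathlib

/-- The combinatorial R-map on ℕ³: `R(a,b,c) = (b + (a−c)₊, min(a,c), b + (c−a)₊)`. -/
def combR : ℕ × ℕ × ℕ → ℕ × ℕ × ℕ :=
  fun p => (p.2.1 + (p.1 - p.2.2), min p.1 p.2.2, p.2.1 + (p.2.2 - p.1))

/-- The combinatorial K-map on ℕ⁴ (computed in ℤ, with nonnegative outputs). -/
def combK : ℕ × ℕ × ℕ × ℕ → ℕ × ℕ × ℕ × ℕ := fun p =>
  let a : ℤ := p.1; let b : ℤ := p.2.1; let c : ℤ := p.2.2.1; let d : ℤ := p.2.2.2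
  let x : ℤ := max (c - a + max (d - b) 0) 0
  ((x + a + b - d).toNat, (c - x + d - min a (c + x)).toNat,
    (min a (c + x)).toNat, (b + max (c + x - a) 0).toNat)

/-- `app3 f i j k` applies `f` to the components at positions `i, j, k` (in that order)
of an `N`-fold product, leaving all other components unchanged. -/
def app3 {V : Type*} {N : ℕ} (f : V × V × V → V × V × V) (i j k : Fin N)
    (v : Fin N → V) : Fin N → V := fun m =>
  if m = i then (f (v i, v j, v k)).1
  else if m = j then (f (v i, v j, v k)).2.1
  else if m = k then (f (v i, v j, v k)).2.2
  else v m

/-- `app4 f i j k l` applies `f` to the components at positions `i, j, k, l` (in that order)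
of an `N`-fold product, leaving all other components unchanged. -/
def app4 {V : Type*} {N : ℕ} (f : V × V × V × V → V × V × V × V) (i j k l : Fin N)
    (v : Fin N → V) : Fin N → V := fun m =>
  if m = i then (f (v i, v j, v k, v l)).1
  else if m = j then (f (v i, v j, v k, v l)).2.1
  else if m = k then (f (v i, v j, v k, v l)).2.2.1
  else if m = l then (f (v i, v j, v k, v l)).2.2.2
  else v m

/-!
Replacing `(min, +)` by `(+, *)` lifts `combR` and `combK` to the subtraction-free rational maps
`geomR` and `geomK`, which make sense over every semifield; over the tropical semifield of `ℤ` they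
are the combinatorial maps again. It therefore suffices to prove the reflection equation for the
rational maps over semifields without additive inverses, at vectors `x` with nonzero entries.
There, every entry met along either side is a Laurent monomial in the `x i` and in fourteen
polynomials `tau x`, and applying one factor of the equation amounts to one or two three-term
relations between these polynomials. Both sides end in the same vector of Laurent monomials.
-/

section Positions

variable {V : Type*} {N : ℕ}

theorem app3_eq_of {f : V × V × V → V × V × V} {i j k : Fin N} {v w : Fin N → V}
    (hf : f (v i, v j, v k) = (w i, w j, w k))
    (hvw : ∀ m, m ≠ i → m ≠ j → m ≠ k → v m = w m) : app3 f i j k v = w := by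
  funext m
  unfold app3
  split_ifs with hi hj hk
  · rw [hf, hi]
  · rw [hf, hj]
  · rw [hf, hk]
  · exact hvw m hi hj hk

theorem app4_eq_of {f : V × V × V × V → V × V × V × V} {i j k l : Fin N} {v w : Fin N → V}
    (hf : f (v i, v j, v k, v l) = (w i, w j, w k, w l))
    (hvw : ∀ m, m ≠ i → m ≠ j → m ≠ k → m ≠ l → v m = w m) : app4 f i j k l v = w := by
  funext m
  unfold app4
  split_ifs with hi hj hk hl
  · rw [hf, hi]
  · rw [hf, hj]
  · rw [hf, hk]
  · rw [hf, hl]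
  · exact hvw m hi hj hk hl

/-- The composite `R₆₈₉ K₃₅₇₉ R₂₄₉ R₂₅₈ K₁₄₇₈ K₁₂₃₆ R₄₅₆` on the left of the reflection equation,
for arbitrary maps `R` and `K`. Positions are 0-based in the code. -/
def reflectionLeft (R : V × V × V → V × V × V) (K : V × V × V × V → V × V × V × V) :
    (Fin 9 → V) → Fin 9 → V :=
  app3 R 5 7 8 ∘ app4 K 2 4 6 8 ∘ app3 R 1 3 8 ∘ app3 R 1 4 7 ∘
    app4 K 0 3 6 7 ∘ app4 K 0 1 2 5 ∘ app3 R 3 4 5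

/-- The composite `R₄₅₆ K₁₂₃₆ K₁₄₇₈ R₂₅₈ R₂₄₉ K₃₅₇₉ R₆₈₉` on the right of the reflection equation,
for arbitrary maps `R` and `K`. Positions are 0-based in the code. -/
def reflectionRight (R : V × V × V → V × V × V) (K : V × V × V × V → V × V × V × V) :
    (Fin 9 → V) → Fin 9 → V :=
  app3 R 3 4 5 ∘ app4 K 0 1 2 5 ∘ app4 K 0 3 6 7 ∘ app3 R 1 4 7 ∘
    app3 R 1 3 8 ∘ app4 K 2 4 6 8 ∘ app3 R 5 7 8

variable {W : Type*} {φ : V → W}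

theorem semiconj_app3 {R : V × V × V → V × V × V} {R' : W × W × W → W × W × W}
    (hR : Function.Semiconj (Prod.map φ (Prod.map φ φ)) R R') (i j k : Fin N) :
    Function.Semiconj (φ ∘ ·) (app3 R i j k) (app3 R' i j k) := by
  intro v
  have hR' := hR (v i, v j, v k)
  funext m
  simp only [Prod.map] at hR'
  simp only [app3, Function.comp_apply, ← hR']
  split_ifs <;> rfl

theorem semiconj_app4 {K : V × V × V × V → V × V × V × V} {K' : W × W × W × W → W × W × W × W}
    (hK : Function.Semiconj (Prod.map φ (Prod.map φ (Prod.map φ φ))) K K') (i j k l : Fin N) :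
    Function.Semiconj (φ ∘ ·) (app4 K i j k l) (app4 K' i j k l) := by
  intro v
  have hK' := hK (v i, v j, v k, v l)
  funext m
  simp only [Prod.map] at hK'
  simp only [app4, Function.comp_apply, ← hK']
  split_ifs <;> rfl

section Reflection

variable {R : V × V × V → V × V × V} {R' : W × W × W → W × W × W}
  {K : V × V × V × V → V × V × V × V} {K' : W × W × W × W → W × W × W × W}

theorem semiconj_reflectionLeft
    (hR : Function.Semiconj (Prod.map φ (Prod.map φ φ)) R R')
    (hK : Function.Semiconj (Prod.map φ (Prod.map φ (Prod.map φ φ))) K K') :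
    Function.Semiconj (φ ∘ ·) (reflectionLeft R K) (reflectionLeft R' K') :=
  (semiconj_app3 hR 5 7 8).comp_right <| (semiconj_app4 hK 2 4 6 8).comp_right <|
    (semiconj_app3 hR 1 3 8).comp_right <| (semiconj_app3 hR 1 4 7).comp_right <|
    (semiconj_app4 hK 0 3 6 7).comp_right <| (semiconj_app4 hK 0 1 2 5).comp_right <|
    semiconj_app3 hR 3 4 5

theorem semiconj_reflectionRight
    (hR : Function.Semiconj (Prod.map φ (Prod.map φ φ)) R R')
    (hK : Function.Semiconj (Prod.map φ (Prod.map φ (Prod.map φ φ))) K K') :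
    Function.Semiconj (φ ∘ ·) (reflectionRight R K) (reflectionRight R' K') :=
  (semiconj_app3 hR 3 4 5).comp_right <| (semiconj_app4 hK 0 1 2 5).comp_right <|
    (semiconj_app4 hK 0 3 6 7).comp_right <| (semiconj_app3 hR 1 4 7).comp_right <|
    (semiconj_app3 hR 1 3 8).comp_right <| (semiconj_app4 hK 2 4 6 8).comp_right <|
    semiconj_app3 hR 5 7 8

end Reflection

end Positions

section GeometricMaps

variable {F : Type*} [Semifield F]

/-- The geometric lift of `combR`. -/
def geomR : F × F × F → F × F × F := fun (a, b, c) =>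
  (a * b / (a + c), a + c, b * c / (a + c))

/-- The geometric lift of `combK`: it tropicalizes to `combK` because the latter sends `(a,b,c,d)`
to `(a + b + c - P, 2P - Q, Q - P, b + 2c + d - Q)` with `P = min (a + b) (min a c + d)` and
`Q = min (2a + b) (2 min a c + d)`. -/
def geomK : F × F × F × F → F × F × F × F := fun (a, b, c, d) =>
  let P := a * b + (a + c) * d
  let Q := a ^ 2 * b + (a + c) ^ 2 * d
  (a * b * c / P, P ^ 2 / Q, Q / P, b * c ^ 2 * d / Q)

theorem geomR_eq_of {a b c a' b' c' : F} (hsum : b' = a + c) (hab : a' * b' = a * b)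
    (hbc : b' * c' = b * c) (hb' : b' ≠ 0) : geomR (a, b, c) = (a', b', c') := by
  simp only [geomR, ← hsum, ← hab, ← hbc, mul_div_cancel_right₀ _ hb', mul_div_cancel_left₀ _ hb']

theorem geomK_eq_of {a b c d a' b' c' d' : F}
    (hP : b' * c' = a * b + (a + c) * d) (hQ : b' * c' ^ 2 = a ^ 2 * b + (a + c) ^ 2 * d)
    (habc : a' * b' * c' = a * b * c) (hbcd : b' * c' ^ 2 * d' = b * c ^ 2 * d)
    (hb' : b' ≠ 0) (hc' : c' ≠ 0) : geomK (a, b, c, d) = (a', b', c', d') := by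
  simp only [geomK, ← hP, ← hQ, ← habc, ← hbcd]
  ext <;> dsimp only <;> field_simp

end GeometricMaps

section TauFunctions

variable {F : Type*}

/-- Nonzero `p 0, …, p 13` satisfying the relations that make both sides of the reflection equation
for `geomR` and `geomK`, started at `x`, run through Laurent monomials in `x` and `p`. The field
names give the side of the equation and the factor (with 0-based positions) each relation is for;
the two relations of a factor `geomK` are for its polynomials `P` and `Q`. -/
structure IsTauSystem [CommSemiring F] (x : Fin 9 → F) (p : Fin 14 → F) : Prop where
  ne_zero : ∀ i, p i ≠ 0
  left345 : p 0 = x 3 + x 5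
  left0125P : p 1 = x 0 * x 1 * p 0 + (x 0 + x 2) * x 4 * x 5
  left0125Q : p 2 = x 0 ^ 2 * x 1 * p 0 + (x 0 + x 2) ^ 2 * x 4 * x 5
  left0367P : p 3 = x 0 * x 1 * x 2 * x 3 * x 4 + (x 0 * x 1 * x 2 * p 0 + x 6 * p 1) * x 7
  left0367Q : p 4 = (x 0 * x 1 * x 2) ^ 2 * x 3 * x 4 * p 0 +
    (x 0 * x 1 * x 2 * p 0 + x 6 * p 1) ^ 2 * x 7
  left147 : p 0 * p 5 = p 4 + x 3 * x 4 * x 6 ^ 2 * x 7 * p 2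
  left138 : p 6 = p 4 + p 5 * x 8
  left2468P : p 1 * p 4 * p 7 = p 1 ^ 2 * p 6 + (p 2 * p 3 + p 4) * p 3 * x 8
  left2468Q : p 1 ^ 2 * p 4 * p 8 = p 1 ^ 2 * p 2 * p 6 + (p 2 * p 3 + p 4) ^ 2 * x 8
  left578 : p 2 * p 9 = x 1 * x 2 ^ 2 * x 4 * x 5 * p 8 + p 5 * x 8
  right578 : p 10 = x 5 + x 8
  right2468P : p 11 = x 2 * x 4 * p 10 + (x 2 + x 6) * x 7 * x 8
  right2468Q : p 12 = x 2 ^ 2 * x 4 * p 10 + (x 2 + x 6) ^ 2 * x 7 * x 8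
  right138 : p 9 = x 1 * p 12 + x 4 * x 6 ^ 2 * x 7 * x 8
  right147 : p 13 = x 1 * x 3 * p 12 + p 9 * p 10
  right0367P : p 7 * p 12 = x 0 * p 13 + (x 0 * p 11 + p 12) * p 11
  right0367Q : p 8 * p 12 = x 0 ^ 2 * p 13 + (x 0 * p 11 + p 12) ^ 2
  right0125P : p 3 * p 10 * p 11 = x 0 * x 1 * x 3 * p 11 ^ 2 +
    (x 0 * p 13 + x 2 * x 4 * x 6 * p 7 * p 10) * x 5 * x 7
  right0125Q : p 6 * p 10 * p 11 ^ 2 = x 0 ^ 2 * x 1 * x 3 * p 11 ^ 2 * p 13 +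
    (x 0 * p 13 + x 2 * x 4 * x 6 * p 7 * p 10) ^ 2 * x 5 * x 7
  right345 : p 5 * p 13 = p 6 * p 9 + x 1 * x 2 ^ 2 * x 3 * x 4 ^ 2 * x 5 * x 6 ^ 2 * x 7 * p 8

/-- The tau system of `x`, with every entry a polynomial in `x` with coefficients in `ℕ`. For the
entries 5, 7 and 8 these are the quotients that solve `left147`, `right0367P` and `right0367Q`. -/
def tau [CommSemiring F] (x : Fin 9 → F) : Fin 14 → F :=
  let p₀ := x 3 + x 5
  let p₁ := x 0 * x 1 * p₀ + (x 0 + x 2) * x 4 * x 5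
  let p₂ := x 0 ^ 2 * x 1 * p₀ + (x 0 + x 2) ^ 2 * x 4 * x 5
  let p₃ := x 0 * x 1 * x 2 * x 3 * x 4 + (x 0 * x 1 * x 2 * p₀ + x 6 * p₁) * x 7
  let p₄ := (x 0 * x 1 * x 2) ^ 2 * x 3 * x 4 * p₀ + (x 0 * x 1 * x 2 * p₀ + x 6 * p₁) ^ 2 * x 7
  let p₅ :=
    x 0 ^ 2 * x 1 * x 3 *
        (x 1 * x 2 ^ 2 * x 4 + x 1 * (x 2 + x 6) ^ 2 * x 7 + x 4 * x 6 ^ 2 * x 7) +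
      (x 0 * x 1 * (x 2 + x 6) + (x 0 + x 2) * x 4 * x 6) ^ 2 * x 5 * x 7
  let p₆ := p₄ + p₅ * x 8
  let p₇ := x 0 * x 1 * (x 3 + x 5 + x 8) + (x 0 + x 2) * x 4 * (x 5 + x 8) +
    (x 0 + x 2 + x 6) * x 7 * x 8
  let p₈ := x 0 ^ 2 * x 1 * (x 3 + x 5 + x 8) + (x 0 + x 2) ^ 2 * x 4 * (x 5 + x 8) +
    (x 0 + x 2 + x 6) ^ 2 * x 7 * x 8
  let p₁₀ := x 5 + x 8
  let p₁₁ := x 2 * x 4 * p₁₀ + (x 2 + x 6) * x 7 * x 8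
  let p₁₂ := x 2 ^ 2 * x 4 * p₁₀ + (x 2 + x 6) ^ 2 * x 7 * x 8
  let p₉ := x 1 * p₁₂ + x 4 * x 6 ^ 2 * x 7 * x 8
  let p₁₃ := x 1 * x 3 * p₁₂ + p₉ * p₁₀
  ![p₀, p₁, p₂, p₃, p₄, p₅, p₆, p₇, p₈, p₉, p₁₀, p₁₁, p₁₂, p₁₃]

theorem tau_ne_zero [CommSemiring F] [NoZeroDivisors F] [Subsingleton (AddUnits F)]
    {x : Fin 9 → F} (hx : ∀ i, x i ≠ 0) (i : Fin 14) : tau x i ≠ 0 := by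
  fin_cases i <;> simp [tau, hx]

section Relations

variable [CommSemiring F] (x : Fin 9 → F)

theorem tau_left2468P : tau x 1 * tau x 4 * tau x 7 =
    tau x 1 ^ 2 * tau x 6 + (tau x 2 * tau x 3 + tau x 4) * tau x 3 * x 8 := by
  simp only [tau, Matrix.cons_val]
  ring

theorem tau_left2468Q : tau x 1 ^ 2 * tau x 4 * tau x 8 =
    tau x 1 ^ 2 * tau x 2 * tau x 6 + (tau x 2 * tau x 3 + tau x 4) ^ 2 * x 8 := by
  simp only [tau, Matrix.cons_val]
  ring

theorem tau_right0125P : tau x 3 * tau x 10 * tau x 11 = x 0 * x 1 * x 3 * tau x 11 ^ 2 +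
    (x 0 * tau x 13 + x 2 * x 4 * x 6 * tau x 7 * tau x 10) * x 5 * x 7 := by
  simp only [tau, Matrix.cons_val]
  ring

theorem tau_right0125Q : tau x 6 * tau x 10 * tau x 11 ^ 2 =
    x 0 ^ 2 * x 1 * x 3 * tau x 11 ^ 2 * tau x 13 +
      (x 0 * tau x 13 + x 2 * x 4 * x 6 * tau x 7 * tau x 10) ^ 2 * x 5 * x 7 := by
  simp only [tau, Matrix.cons_val]
  ring

end Relations

theorem isTauSystem_tau [CommSemiring F] [NoZeroDivisors F] [Subsingleton (AddUnits F)]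
    {x : Fin 9 → F} (hx : ∀ i, x i ≠ 0) : IsTauSystem x (tau x) where
  ne_zero := tau_ne_zero hx
  left345 := rfl
  left0125P := rfl
  left0125Q := rfl
  left0367P := rfl
  left0367Q := rfl
  left147 := by simp only [tau, Matrix.cons_val]; ring
  left138 := rfl
  left2468P := tau_left2468P x
  left2468Q := tau_left2468Q x
  left578 := by simp only [tau, Matrix.cons_val]; ring
  right578 := rfl
  right2468P := rfl
  right2468Q := rfl
  right138 := rfl
  right147 := rfl
  right0367P := by simp only [tau, Matrix.cons_val]; ring
  right0367Q := by simp only [tau, Matrix.cons_val]; ring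
  right0125P := tau_right0125P x
  right0125Q := tau_right0125Q x
  right345 := by simp only [tau, Matrix.cons_val]; ring

end TauFunctions

section Trajectories

variable {F : Type*} [Semifield F]

/-- Row `n` is the image of `x` under the first `n` factors, from the right, of
`reflectionLeft geomR geomK`, in terms of a tau system `p` of `x`. -/
def leftTrajectory (x : Fin 9 → F) (p : Fin 14 → F) : Fin 8 → Fin 9 → F :=
  ![x,
    ![x 0, x 1, x 2, x 3 * x 4 / p 0, p 0, x 4 * x 5 / p 0, x 6, x 7, x 8],
    ![x 0 * x 1 * x 2 * p 0 / p 1, p 1 ^ 2 / (p 0 * p 2), p 2 / p 1, x 3 * x 4 / p 0, p 0,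
      x 1 * x 2 ^ 2 * x 4 * x 5 / p 2, x 6, x 7, x 8],
    ![x 0 * x 1 * x 2 * x 3 * x 4 * x 6 / p 3, p 1 ^ 2 / (p 0 * p 2), p 2 / p 1, p 3 ^ 2 / p 4,
      p 0, x 1 * x 2 ^ 2 * x 4 * x 5 / p 2, p 4 / (p 1 * p 3),
      x 3 * x 4 * x 6 ^ 2 * x 7 * p 1 ^ 2 / (p 0 * p 4), x 8],
    ![x 0 * x 1 * x 2 * x 3 * x 4 * x 6 / p 3, p 4 / p 5, p 2 / p 1, p 3 ^ 2 / p 4,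
      p 1 ^ 2 * p 5 / (p 2 * p 4), x 1 * x 2 ^ 2 * x 4 * x 5 / p 2, p 4 / (p 1 * p 3),
      x 3 * x 4 * x 6 ^ 2 * x 7 * p 2 / p 5, x 8],
    ![x 0 * x 1 * x 2 * x 3 * x 4 * x 6 / p 3, p 3 ^ 2 / p 6, p 2 / p 1, p 6 / p 5,
      p 1 ^ 2 * p 5 / (p 2 * p 4), x 1 * x 2 ^ 2 * x 4 * x 5 / p 2, p 4 / (p 1 * p 3),
      x 3 * x 4 * x 6 ^ 2 * x 7 * p 2 / p 5, x 8 * p 3 ^ 2 * p 5 / (p 4 * p 6)],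
    ![x 0 * x 1 * x 2 * x 3 * x 4 * x 6 / p 3, p 3 ^ 2 / p 6, p 6 / (p 3 * p 7), p 6 / p 5,
      p 5 * p 7 ^ 2 / (p 6 * p 8), x 1 * x 2 ^ 2 * x 4 * x 5 / p 2, p 8 / p 7,
      x 3 * x 4 * x 6 ^ 2 * x 7 * p 2 / p 5, x 8 * p 5 / (p 2 * p 8)],
    ![x 0 * x 1 * x 2 * x 3 * x 4 * x 6 / p 3, p 3 ^ 2 / p 6, p 6 / (p 3 * p 7), p 6 / p 5,
      p 5 * p 7 ^ 2 / (p 6 * p 8),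
      x 1 * x 2 ^ 2 * x 3 * x 4 ^ 2 * x 5 * x 6 ^ 2 * x 7 * p 8 / (p 5 * p 9), p 8 / p 7,
      p 9 / p 8, x 3 * x 4 * x 6 ^ 2 * x 7 * x 8 / p 9]]

/-- Row `n` is the image of `x` under the first `n` factors, from the right, of
`reflectionRight geomR geomK`, in terms of a tau system `p` of `x`. -/
def rightTrajectory (x : Fin 9 → F) (p : Fin 14 → F) : Fin 8 → Fin 9 → F :=
  ![x,
    ![x 0, x 1, x 2, x 3, x 4, x 5 * x 7 / p 10, x 6, p 10, x 7 * x 8 / p 10],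
    ![x 0, x 1, x 2 * x 4 * x 6 * p 10 / p 11, x 3, p 11 ^ 2 / (p 10 * p 12), x 5 * x 7 / p 10,
      p 12 / p 11, p 10, x 4 * x 6 ^ 2 * x 7 * x 8 / p 12],
    ![x 0, x 1 * x 3 * p 12 / p 9, x 2 * x 4 * x 6 * p 10 / p 11, p 9 / p 12,
      p 11 ^ 2 / (p 10 * p 12), x 5 * x 7 / p 10, p 12 / p 11, p 10,
      x 3 * x 4 * x 6 ^ 2 * x 7 * x 8 / p 9],
    ![x 0, x 1 * x 3 * p 11 ^ 2 / (p 10 * p 13), x 2 * x 4 * x 6 * p 10 / p 11, p 9 / p 12,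
      p 13 / p 9, x 5 * x 7 / p 10, p 12 / p 11, p 9 * p 11 ^ 2 / (p 12 * p 13),
      x 3 * x 4 * x 6 ^ 2 * x 7 * x 8 / p 9],
    ![x 0 * p 13 / (p 7 * p 11), x 1 * x 3 * p 11 ^ 2 / (p 10 * p 13),
      x 2 * x 4 * x 6 * p 10 / p 11, p 7 ^ 2 * p 9 / (p 8 * p 13), p 13 / p 9, x 5 * x 7 / p 10,
      p 8 / p 7, p 9 / p 8, x 3 * x 4 * x 6 ^ 2 * x 7 * x 8 / p 9],
    ![x 0 * x 1 * x 2 * x 3 * x 4 * x 6 / p 3, p 3 ^ 2 / p 6, p 6 / (p 3 * p 7),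
      p 7 ^ 2 * p 9 / (p 8 * p 13), p 13 / p 9,
      x 1 * x 2 ^ 2 * x 3 * x 4 ^ 2 * x 5 * x 6 ^ 2 * x 7 * p 7 ^ 2 / (p 6 * p 13), p 8 / p 7,
      p 9 / p 8, x 3 * x 4 * x 6 ^ 2 * x 7 * x 8 / p 9],
    ![x 0 * x 1 * x 2 * x 3 * x 4 * x 6 / p 3, p 3 ^ 2 / p 6, p 6 / (p 3 * p 7), p 6 / p 5,
      p 5 * p 7 ^ 2 / (p 6 * p 8),
      x 1 * x 2 ^ 2 * x 3 * x 4 ^ 2 * x 5 * x 6 ^ 2 * x 7 * p 8 / (p 5 * p 9), p 8 / p 7,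
      p 9 / p 8, x 3 * x 4 * x 6 ^ 2 * x 7 * x 8 / p 9]]

theorem leftTrajectory_seven_eq_rightTrajectory_seven (x : Fin 9 → F) (p : Fin 14 → F) :
    leftTrajectory x p 7 = rightTrajectory x p 7 := by
  simp only [leftTrajectory, rightTrajectory, Matrix.cons_val]

namespace IsTauSystem

variable {x : Fin 9 → F} {p : Fin 14 → F} (h : IsTauSystem x p)
include h

theorem geomR_left345 :
    app3 geomR 3 4 5 (leftTrajectory x p 0) = leftTrajectory x p 1 := by
  have hp := h.ne_zero
  refine app3_eq_of (geomR_eq_of ?sum ?ab ?bc ?ne) ?rest <;>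
    simp only [leftTrajectory, Matrix.cons_val]
  case sum => exact h.left345
  case ab | bc => field_simp [hp]
  case ne => simp [hp]
  case rest => intro m; fin_cases m <;> simp

theorem geomK_left0125 :
    app4 geomK 0 1 2 5 (leftTrajectory x p 1) = leftTrajectory x p 2 := by
  have hp := h.ne_zero
  refine app4_eq_of (geomK_eq_of ?P ?Q ?abc ?bcd ?ne_b ?ne_c) ?rest <;>
    simp only [leftTrajectory, Matrix.cons_val]
  case P => field_simp [hp]; convert h.left0125P using 1; ring
  case Q => field_simp [hp]; convert h.left0125Q using 1; ring
  case abc | bcd => field_simp [hp]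
  case ne_b | ne_c => simp [hp]
  case rest => intro m; fin_cases m <;> simp

theorem geomK_left0367 :
    app4 geomK 0 3 6 7 (leftTrajectory x p 2) = leftTrajectory x p 3 := by
  have hp := h.ne_zero
  refine app4_eq_of (geomK_eq_of ?P ?Q ?abc ?bcd ?ne_b ?ne_c) ?rest <;>
    simp only [leftTrajectory, Matrix.cons_val]
  case P => field_simp [hp]; convert h.left0367P using 1; ring
  case Q => field_simp [hp]; convert h.left0367Q using 1; ring
  case abc | bcd => field_simp [hp]
  case ne_b | ne_c => simp [hp]
  case rest => intro m; fin_cases m <;> simp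

theorem geomR_left147 :
    app3 geomR 1 4 7 (leftTrajectory x p 3) = leftTrajectory x p 4 := by
  have hp := h.ne_zero
  refine app3_eq_of (geomR_eq_of ?sum ?ab ?bc ?ne) ?rest <;>
    simp only [leftTrajectory, Matrix.cons_val]
  case sum => field_simp [hp]; convert h.left147 using 1 <;> ring
  case ab | bc => field_simp [hp]
  case ne => simp [hp]
  case rest => intro m; fin_cases m <;> simp

theorem geomR_left138 :
    app3 geomR 1 3 8 (leftTrajectory x p 4) = leftTrajectory x p 5 := by
  have hp := h.ne_zero
  refine app3_eq_of (geomR_eq_of ?sum ?ab ?bc ?ne) ?rest <;>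
    simp only [leftTrajectory, Matrix.cons_val]
  case sum => field_simp [hp]; convert h.left138 using 1
  case ab | bc => field_simp [hp]
  case ne => simp [hp]
  case rest => intro m; fin_cases m <;> simp

theorem geomK_left2468 :
    app4 geomK 2 4 6 8 (leftTrajectory x p 5) = leftTrajectory x p 6 := by
  have hp := h.ne_zero
  refine app4_eq_of (geomK_eq_of ?P ?Q ?abc ?bcd ?ne_b ?ne_c) ?rest <;>
    simp only [leftTrajectory, Matrix.cons_val]
  case P => field_simp [hp]; convert h.left2468P using 1 <;> ring
  case Q => field_simp [hp]; convert h.left2468Q using 1 <;> ring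
  case abc | bcd => field_simp [hp]
  case ne_b | ne_c => simp [hp]
  case rest => intro m; fin_cases m <;> simp

theorem geomR_left578 :
    app3 geomR 5 7 8 (leftTrajectory x p 6) = leftTrajectory x p 7 := by
  have hp := h.ne_zero
  refine app3_eq_of (geomR_eq_of ?sum ?ab ?bc ?ne) ?rest <;>
    simp only [leftTrajectory, Matrix.cons_val]
  case sum => field_simp [hp]; convert h.left578 using 1 <;> ring
  case ab | bc => field_simp [hp]
  case ne => simp [hp]
  case rest => intro m; fin_cases m <;> simp

theorem geomR_right578 :
    app3 geomR 5 7 8 (rightTrajectory x p 0) = rightTrajectory x p 1 := by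
  have hp := h.ne_zero
  refine app3_eq_of (geomR_eq_of ?sum ?ab ?bc ?ne) ?rest <;>
    simp only [rightTrajectory, Matrix.cons_val]
  case sum => exact h.right578
  case ab | bc => field_simp [hp]
  case ne => simp [hp]
  case rest => intro m; fin_cases m <;> simp

theorem geomK_right2468 :
    app4 geomK 2 4 6 8 (rightTrajectory x p 1) = rightTrajectory x p 2 := by
  have hp := h.ne_zero
  refine app4_eq_of (geomK_eq_of ?P ?Q ?abc ?bcd ?ne_b ?ne_c) ?rest <;>
    simp only [rightTrajectory, Matrix.cons_val]
  case P => field_simp [hp]; convert h.right2468P using 1; ring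
  case Q => field_simp [hp]; convert h.right2468Q using 1; ring
  case abc | bcd => field_simp [hp]
  case ne_b | ne_c => simp [hp]
  case rest => intro m; fin_cases m <;> simp

theorem geomR_right138 :
    app3 geomR 1 3 8 (rightTrajectory x p 2) = rightTrajectory x p 3 := by
  have hp := h.ne_zero
  refine app3_eq_of (geomR_eq_of ?sum ?ab ?bc ?ne) ?rest <;>
    simp only [rightTrajectory, Matrix.cons_val]
  case sum => field_simp [hp]; convert h.right138 using 1; ring
  case ab | bc => field_simp [hp]
  case ne => simp [hp]
  case rest => intro m; fin_cases m <;> simp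

theorem geomR_right147 :
    app3 geomR 1 4 7 (rightTrajectory x p 3) = rightTrajectory x p 4 := by
  have hp := h.ne_zero
  refine app3_eq_of (geomR_eq_of ?sum ?ab ?bc ?ne) ?rest <;>
    simp only [rightTrajectory, Matrix.cons_val]
  case sum => field_simp [hp]; convert h.right147 using 1
  case ab | bc => field_simp [hp]
  case ne => simp [hp]
  case rest => intro m; fin_cases m <;> simp

theorem geomK_right0367 :
    app4 geomK 0 3 6 7 (rightTrajectory x p 4) = rightTrajectory x p 5 := by
  have hp := h.ne_zero
  refine app4_eq_of (geomK_eq_of ?P ?Q ?abc ?bcd ?ne_b ?ne_c) ?rest <;>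
    simp only [rightTrajectory, Matrix.cons_val]
  case P => field_simp [hp]; convert h.right0367P using 1; ring
  case Q => field_simp [hp]; convert h.right0367Q using 1; ring
  case abc | bcd => field_simp [hp]
  case ne_b | ne_c => simp [hp]
  case rest => intro m; fin_cases m <;> simp

theorem geomK_right0125 :
    app4 geomK 0 1 2 5 (rightTrajectory x p 5) = rightTrajectory x p 6 := by
  have hp := h.ne_zero
  refine app4_eq_of (geomK_eq_of ?P ?Q ?abc ?bcd ?ne_b ?ne_c) ?rest <;>
    simp only [rightTrajectory, Matrix.cons_val]
  case P => field_simp [hp]; convert h.right0125P using 1 <;> ring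
  case Q => field_simp [hp]; convert h.right0125Q using 1 <;> ring
  case abc | bcd => field_simp [hp]
  case ne_b | ne_c => simp [hp]
  case rest => intro m; fin_cases m <;> simp

theorem geomR_right345 :
    app3 geomR 3 4 5 (rightTrajectory x p 6) = rightTrajectory x p 7 := by
  have hp := h.ne_zero
  refine app3_eq_of (geomR_eq_of ?sum ?ab ?bc ?ne) ?rest <;>
    simp only [rightTrajectory, Matrix.cons_val]
  case sum => field_simp [hp]; convert h.right345 using 1; ring
  case ab | bc => field_simp [hp]
  case ne => simp [hp]
  case rest => intro m; fin_cases m <;> simp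

theorem reflectionLeft_eq : reflectionLeft geomR geomK x = leftTrajectory x p 7 := by
  change reflectionLeft geomR geomK (leftTrajectory x p 0) = _
  simp only [reflectionLeft, Function.comp_apply, h.geomR_left345, h.geomK_left0125,
    h.geomK_left0367, h.geomR_left147, h.geomR_left138, h.geomK_left2468, h.geomR_left578]

theorem reflectionRight_eq : reflectionRight geomR geomK x = rightTrajectory x p 7 := by
  change reflectionRight geomR geomK (rightTrajectory x p 0) = _
  simp only [reflectionRight, Function.comp_apply, h.geomR_right578, h.geomK_right2468,
    h.geomR_right138, h.geomR_right147, h.geomK_right0367, h.geomK_right0125, h.geomR_right345]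

end IsTauSystem

theorem geomRK_reflection [Subsingleton (AddUnits F)] {x : Fin 9 → F} (hx : ∀ i, x i ≠ 0) :
    reflectionLeft geomR geomK x = reflectionRight geomR geomK x :=
  calc reflectionLeft geomR geomK x
      = leftTrajectory x (tau x) 7 := (isTauSystem_tau hx).reflectionLeft_eq
    _ = rightTrajectory x (tau x) 7 :=
      leftTrajectory_seven_eq_rightTrajectory_seven x (tau x)
    _ = reflectionRight geomR geomK x := (isTauSystem_tau hx).reflectionRight_eq.symm

end Trajectories

section Tropicalization

open Tropical

instance tropicalSemifield {R : Type*} [LinearOrderedAddCommGroupWithTop R] :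
    Semifield (Tropical R) where
  exists_pair_ne := ⟨0, 1, fun h =>
    LinearOrderedAddCommGroupWithTop.top_ne_zero (congrArg untrop h)⟩
  mul_inv_cancel a ha := untrop_injective <|
    LinearOrderedAddCommGroupWithTop.add_neg_cancel_of_ne_top fun h => ha (untrop_injective h)
  inv_zero := untrop_injective LinearOrderedAddCommGroupWithTop.neg_top
  div_eq_mul_inv _ _ := untrop_injective (sub_eq_add_neg _ _)
  zpow n a := trop (n • untrop a)
  zpow_zero' _ := untrop_injective (SubNegMonoid.zsmul_zero' _)
  zpow_succ' _ _ := untrop_injective (SubNegMonoid.zsmul_succ' _ _)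
  zpow_neg' _ _ := untrop_injective (SubNegMonoid.zsmul_neg' _ _)
  nnqsmul := _
  nnqsmul_def _ _ := rfl

instance subsingleton_addUnits_tropical {R : Type*} [LinearOrder R] [OrderTop R] :
    Subsingleton (AddUnits (Tropical R)) := by
  have val_eq_zero (u : AddUnits (Tropical R)) : u.val = 0 :=
    untrop_injective (min_eq_top.mp (congrArg untrop u.val_neg)).1
  exact ⟨fun u v => AddUnits.ext ((val_eq_zero u).trans (val_eq_zero v).symm)⟩

/-- The embedding of `ℤ` into the tropical semifield, whose zero is `⊤`. -/
def intTrop (n : ℤ) : Tropical (WithTop ℤ) := trop (n : WithTop ℤ)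

theorem intTrop_injective : Function.Injective intTrop :=
  trop_injective.comp WithTop.coe_injective

theorem intTrop_ne_zero (n : ℤ) : intTrop n ≠ 0 := fun h =>
  WithTop.coe_ne_top (trop_injective h)

theorem intTrop_add (m n : ℤ) : intTrop (m + n) = intTrop m * intTrop n := rfl

theorem intTrop_sub (m n : ℤ) : intTrop (m - n) = intTrop m / intTrop n := rfl

theorem intTrop_min (m n : ℤ) : intTrop (min m n) = intTrop m + intTrop n :=
  untrop_injective (WithTop.coe_min m n)

theorem intTrop_two_mul (n : ℤ) : intTrop (2 * n) = intTrop n ^ 2 := by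
  rw [two_mul, intTrop_add, sq]

theorem geomR_intTrop (a b c : ℤ) : geomR (intTrop a, intTrop b, intTrop c) =
    (intTrop (a + b - min a c), intTrop (min a c), intTrop (b + c - min a c)) := by
  simp only [geomR, intTrop_add, intTrop_sub, intTrop_min]

theorem geomK_intTrop (a b c d : ℤ) :
    let P := min (a + b) (min a c + d)
    let Q := min (2 * a + b) (2 * min a c + d)
    geomK (intTrop a, intTrop b, intTrop c, intTrop d) =
      (intTrop (a + b + c - P), intTrop (2 * P - Q), intTrop (Q - P),
        intTrop (b + 2 * c + d - Q)) := by
  simp only [geomK, intTrop_add, intTrop_sub, intTrop_min, intTrop_two_mul]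

theorem semiconj_combR_geomR :
    Function.Semiconj (Prod.map (fun n : ℕ => intTrop n)
      (Prod.map (fun n : ℕ => intTrop n) (fun n : ℕ => intTrop n))) combR geomR := by
  rintro ⟨a, b, c⟩
  simp only [Prod.map, geomR_intTrop, combR]
  congr 3 <;> omega

theorem semiconj_combK_geomK :
    Function.Semiconj (Prod.map (fun n : ℕ => intTrop n) (Prod.map (fun n : ℕ => intTrop n)
      (Prod.map (fun n : ℕ => intTrop n) (fun n : ℕ => intTrop n)))) combK geomK := by
  rintro ⟨a, b, c, d⟩
  simp only [Prod.map, geomK_intTrop, combK]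
  congr 4 <;> omega

end Tropicalization

/-- The 3D reflection equation of type C₃ on ℕ⁹ (positions written 1-based in the paper,
0-based here): `R₆₈₉ K₃₅₇₉ R₂₄₉ R₂₅₈ K₁₄₇₈ K₁₂₃₆ R₄₅₆ = R₄₅₆ K₁₂₃₆ K₁₄₇₈ R₂₅₈ R₂₄₉ K₃₅₇₉ R₆₈₉`. -/
theorem combRK_3d_reflection_C3 :
    app3 combR 5 7 8 ∘ app4 combK 2 4 6 8 ∘ app3 combR 1 3 8 ∘ app3 combR 1 4 7 ∘
        app4 combK 0 3 6 7 ∘ app4 combK 0 1 2 5 ∘ app3 combR 3 4 5 =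
      app3 combR 3 4 5 ∘ app4 combK 0 1 2 5 ∘ app4 combK 0 3 6 7 ∘ app3 combR 1 4 7 ∘
        app3 combR 1 3 8 ∘ app4 combK 2 4 6 8 ∘
        (app3 combR 5 7 8 : (Fin 9 → ℕ) → Fin 9 → ℕ) := by
  change reflectionLeft combR combK = reflectionRight combR combK
  funext v
  let φ : ℕ → Tropical (WithTop ℤ) := fun n => intTrop n
  have hφ : Function.Injective φ := intTrop_injective.comp Nat.cast_injective
  apply hφ.comp_left
  calc φ ∘ reflectionLeft combR combK v
      = reflectionLeft geomR geomK (φ ∘ v) :=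
        semiconj_reflectionLeft semiconj_combR_geomR semiconj_combK_geomK v
    _ = reflectionRight geomR geomK (φ ∘ v) :=
        geomRK_reflection fun i => intTrop_ne_zero (v i)
    _ = φ ∘ reflectionRight combR combK v :=
        (semiconj_reflectionRight semiconj_combR_geomR semiconj_combK_geomK v).symm
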